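/- Let I: Lip(X) → Lip(Y) be an algebra isomorphism (a bijective linear map that is also multiplicative) between the algebras of bounded scalar-valued Lipschitz functions. Then I is continuous and there exists a bi-Lipschitz homeomorphism h: Y → X such that (If)(y) = f(h(y)) for every f ∈ Lip(X) and every y ∈ Y. -/

import Mathlib

/-!
Write `LipAlg 𝕂 X` for the algebra of bounded Lipschitz functions. For `y : Y` the map
`φ f = (I f) y` is a character of `LipAlg 𝕂 X`, and the main point is that it is the evaluation at
a point of `X`.

A function of `LipAlg 𝕂 X` bounded away from zero is invertible there, so applying this to
`∑ (f i - φ (f i)) * conj (f i - φ (f i))` shows that finitely many values `φ (f i)` are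
simultaneously approximated by the values `f i z` at a point `z` (`exists_approx`). If
`φ (dist · x)` can be made arbitrarily small, the corresponding points `x` form a Cauchy sequence,
and `φ` is the evaluation at its limit. Otherwise `φ (dist · x) ≥ ε` for all `x`. Now the maximal
ideal at `y` has the following algebraic property: with `d = dist · y`, every `k` in it satisfies
`k ^ 2 ∈ (d)`, because `k ^ 2 / d` is Lipschitz. Transporting this to `X` gives `f ∈ ker φ` such
that `f` divides the square of every element of `ker φ`. By approximation there is a uniformly
separated sequence along which `f` tends to zero; bump functions around its even and its odd terms
have product zero, so one of them lies in `ker φ`, yet its square is not dominated by `f`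
(`exists_eval`).

Hence `I f = f ∘ h`, and applying the same to `I⁻¹` shows that `h` is bijective. For the Lipschitz
estimate, `h` pulls back each function `∑ₓ aₓ dist · x`, with `a ∈ ℓ¹(X)`, to a Lipschitz function.
The Banach–Steinhaus theorem on `ℓ¹(X)` makes the Lipschitz constants uniform over the unit ball,
and testing on the unit vectors gives the bound for `h` (`lipschitz_of_comp`).
-/

open Metric Set Function Bornology
open scoped NNReal

/-- `f` is a bounded Lipschitz function. -/
def IsLip {X E : Type*} [PseudoMetricSpace X] [NormedAddCommGroup E] (f : X → E) : Prop :=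
  (∃ K : ℝ≥0, LipschitzWith K f) ∧ ∃ C : ℝ, ∀ x, ‖f x‖ ≤ C

/-- The cozero set of `f`. -/
def coz {X E : Type*} [Zero E] (f : X → E) : Set X := {x | f x ≠ 0}

/-- The norm `‖f‖_L = max {‖f‖_∞, L(f)}` on bounded Lipschitz functions. -/
noncomputable def lipNorm {X E : Type*} [PseudoMetricSpace X] [NormedAddCommGroup E]
    (f : X → E) : ℝ :=
  max (⨆ x, ‖f x‖) (⨆ p : X × X, ‖f p.1 - f p.2‖ / dist p.1 p.2)

/-- `T` is a linear biseparating map from `Lip(X,E)` onto `Lip(Y,F)`: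
it maps bounded Lipschitz functions to bounded Lipschitz functions, is linear,
restricts to a bijection between the spaces of bounded Lipschitz functions, and
both `T` and its inverse are separating (disjointness preserving). -/
structure IsBisep (𝕂 : Type*) {X Y E F : Type*} [RCLike 𝕂]
    [PseudoMetricSpace X] [PseudoMetricSpace Y]
    [NormedAddCommGroup E] [NormedSpace 𝕂 E] [NormedAddCommGroup F] [NormedSpace 𝕂 F]
    (T : (X → E) → (Y → F)) : Prop where
  maps_lip : ∀ f, IsLip f → IsLip (T f)
  map_add : ∀ f g, IsLip f → IsLip g → T (f + g) = T f + T g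
  map_smul : ∀ (c : 𝕂) (f : X → E), IsLip f → T (c • f) = c • T f
  inj : ∀ f g, IsLip f → IsLip g → T f = T g → f = g
  surj : ∀ g, IsLip g → ∃ f, IsLip f ∧ T f = g
  sep : ∀ f g, IsLip f → IsLip g → coz f ∩ coz g = ∅ → coz (T f) ∩ coz (T g) = ∅
  sep_inv : ∀ f g, IsLip f → IsLip g → coz (T f) ∩ coz (T g) = ∅ → coz f ∩ coz g = ∅

/-! ### Closure properties of bounded Lipschitz functions -/

section Closure

variable {𝕂 X : Type*} [RCLike 𝕂] [PseudoMetricSpace X]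

lemma IsLip.add {f g : X → 𝕂} (hf : IsLip f) (hg : IsLip g) : IsLip (f + g) := by
  obtain ⟨⟨K, hK⟩, C, hC⟩ := hf
  obtain ⟨⟨L, hL⟩, D, hD⟩ := hg
  exact ⟨⟨K + L, hK.add hL⟩, C + D, fun x => (norm_add_le _ _).trans (add_le_add (hC x) (hD x))⟩

lemma IsLip.const (c : 𝕂) : IsLip (fun _ : X => c) :=
  ⟨⟨0, LipschitzWith.const c⟩, ‖c‖, fun _ => le_rfl⟩

/-- A criterion with real constants of arbitrary sign. -/
lemma IsLip.of_norm_sub_le {f : X → 𝕂} (K C : ℝ) (h : ∀ x y, ‖f x - f y‖ ≤ K * dist x y)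
    (hC : ∀ x, ‖f x‖ ≤ C) : IsLip f := by
  refine ⟨⟨K.toNNReal, LipschitzWith.of_dist_le_mul fun x y => ?_⟩, C, hC⟩
  rw [dist_eq_norm]
  exact (h x y).trans (mul_le_mul_of_nonneg_right (Real.le_coe_toNNReal K) dist_nonneg)

lemma IsLip.exists_bounds {f : X → 𝕂} (hf : IsLip f) :
    ∃ K C : ℝ, 0 ≤ K ∧ 0 ≤ C ∧ (∀ x y, ‖f x - f y‖ ≤ K * dist x y) ∧ ∀ x, ‖f x‖ ≤ C := by
  obtain ⟨⟨K, hK⟩, C, hC⟩ := hf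
  refine ⟨K, max C 0, K.2, le_max_right _ _, fun x y => ?_, fun x => (hC x).trans (le_max_left _ _)⟩
  rw [← dist_eq_norm]
  exact hK.dist_le_mul x y

lemma IsLip.mul {f g : X → 𝕂} (hf : IsLip f) (hg : IsLip g) : IsLip (f * g) := by
  obtain ⟨K, C, hK0, hC0, hK, hC⟩ := hf.exists_bounds
  obtain ⟨L, D, hL0, hD0, hL, hD⟩ := hg.exists_bounds
  refine IsLip.of_norm_sub_le (C * L + K * D) (C * D) (fun x y => ?_) fun x => ?_
  · have : (f * g) x - (f * g) y = f x * (g x - g y) + (f x - f y) * g y := by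
      simp only [Pi.mul_apply]; ring
    rw [this]
    refine (norm_add_le _ _).trans ?_
    rw [norm_mul, norm_mul]
    have h1 := mul_le_mul (hC x) (hL x y) (norm_nonneg _) hC0
    have h2 := mul_le_mul (hK x y) (hD y) (norm_nonneg _) (by positivity)
    linarith
  · rw [Pi.mul_apply, norm_mul]
    exact mul_le_mul (hC x) (hD x) (norm_nonneg _) hC0

lemma IsLip.star {f : X → 𝕂} (hf : IsLip f) : IsLip (fun x => (starRingEnd 𝕂) (f x)) := by
  obtain ⟨K, C, -, -, hK, hC⟩ := hf.exists_bounds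
  refine IsLip.of_norm_sub_le K C (fun x y => ?_) fun x => ?_
  · rw [← map_sub, RCLike.norm_conj]; exact hK x y
  · rw [RCLike.norm_conj]; exact hC x

lemma IsLip.inv {f : X → 𝕂} (hf : IsLip f) {c : ℝ} (hc : 0 < c) (h : ∀ x, c ≤ ‖f x‖) :
    IsLip (fun x => (f x)⁻¹) := by
  obtain ⟨K, C, hK0, -, hK, -⟩ := hf.exists_bounds
  refine IsLip.of_norm_sub_le (K / (c * c)) c⁻¹ (fun x y => ?_) fun x => ?_
  · have hx : f x ≠ 0 := norm_pos_iff.1 (hc.trans_le (h x))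
    have hy : f y ≠ 0 := norm_pos_iff.1 (hc.trans_le (h y))
    rw [inv_sub_inv hx hy, norm_div, norm_mul, norm_sub_rev, div_mul_eq_mul_div]
    exact div_le_div₀ (by positivity) (hK x y) (by positivity)
      (mul_le_mul (h x) (h y) hc.le (norm_nonneg _))
  · rw [norm_inv]
    exact inv_anti₀ hc (h x)

lemma IsLip.ofReal {f : X → ℝ} {K : ℝ≥0} (hf : LipschitzWith K f) {C : ℝ}
    (hC : ∀ x, |f x| ≤ C) : IsLip (fun x => (f x : 𝕂)) := by
  refine IsLip.of_norm_sub_le K C (fun x y => ?_) fun x => ?_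
  · rw [← RCLike.ofReal_sub, RCLike.norm_ofReal, ← Real.dist_eq]; exact hf.dist_le_mul x y
  · rw [RCLike.norm_ofReal]; exact hC x

/-- The square of a Lipschitz function vanishing at `y` is divisible by `dist · y`. The value of
the quotient at `y` is the junk value `0`, which is the right one. -/
lemma IsLip.sq_div_dist {k : X → 𝕂} (hk : IsLip k) (y : X) (hky : k y = 0) :
    IsLip (fun z => k z ^ 2 / (dist z y : 𝕂)) ∧
      ∀ z, k z ^ 2 = dist z y * (k z ^ 2 / (dist z y : 𝕂)) := by
  obtain ⟨K, C, hK0, hC0, hK, hC⟩ := hk.exists_bounds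
  have hkd : ∀ z, ‖k z‖ ≤ K * dist z y := fun z => by simpa [hky] using hK z y
  have hmul : ∀ z, k z ^ 2 = dist z y * (k z ^ 2 / (dist z y : 𝕂)) := fun z => by
    rcases eq_or_ne (dist z y) 0 with h | h
    · have := hkd z
      rw [h, mul_zero] at this
      rw [norm_le_zero_iff.1 this]; simp
    · have : (dist z y : 𝕂) ≠ 0 := by exact_mod_cast h
      field_simp
  set q : X → 𝕂 := fun z => k z ^ 2 / (dist z y : 𝕂) with hq
  have hnq : ∀ z, ‖q z‖ ≤ K ^ 2 * dist z y := fun z => by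
    rw [hq]
    simp only [norm_div, norm_pow, RCLike.norm_ofReal, abs_of_nonneg dist_nonneg]
    refine div_le_of_le_mul₀ dist_nonneg (by positivity) ?_
    calc ‖k z‖ ^ 2 ≤ (K * dist z y) ^ 2 := pow_le_pow_left₀ (norm_nonneg _) (hkd z) 2
      _ = _ := by ring
  have hnq' : ∀ z, ‖q z‖ ≤ K * C := fun z => by
    rw [hq]
    simp only [norm_div, norm_pow, RCLike.norm_ofReal, abs_of_nonneg dist_nonneg]
    refine div_le_of_le_mul₀ dist_nonneg (by positivity) ?_
    calc ‖k z‖ ^ 2 = ‖k z‖ * ‖k z‖ := sq _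
      _ ≤ (K * dist z y) * C := mul_le_mul (hkd z) (hC z) (norm_nonneg _) (by positivity)
      _ = _ := by ring
  refine ⟨IsLip.of_norm_sub_le (3 * K ^ 2) (K * C) ?_ hnq', hmul⟩
  -- It suffices to treat `dist w y ≤ dist z y`, where one may divide by the larger distance.
  have key : ∀ z w, dist w y ≤ dist z y → ‖q z - q w‖ ≤ 3 * K ^ 2 * dist z w := fun z w hwz => by
    rcases (dist_nonneg : 0 ≤ dist z y).eq_or_lt with h | h
    · have hz := hnq z
      have hw := hnq w
      have h0 : dist w y = 0 := le_antisymm (hwz.trans h.ge) dist_nonneg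
      rw [← h, mul_zero] at hz
      rw [h0, mul_zero] at hw
      rw [norm_le_zero_iff.1 hz, norm_le_zero_iff.1 hw]
      simp only [sub_zero, norm_zero]; positivity
    · have e : (dist z y : 𝕂) * (q z - q w)
          = (k z - k w) * (k z + k w) + ((dist w y - dist z y : ℝ) : 𝕂) * q w := by
        have hz := hmul z
        have hw := hmul w
        rw [RCLike.ofReal_sub]
        linear_combination -hz + hw
      have n : dist z y * ‖q z - q w‖ ≤ dist z y * (3 * K ^ 2 * dist z w) := by
        calc dist z y * ‖q z - q w‖ = ‖(dist z y : 𝕂) * (q z - q w)‖ := by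
              rw [norm_mul, RCLike.norm_ofReal, abs_of_nonneg dist_nonneg]
          _ ≤ ‖k z - k w‖ * ‖k z + k w‖ + |dist w y - dist z y| * ‖q w‖ := by
              rw [e]
              refine (norm_add_le _ _).trans ?_
              rw [norm_mul, norm_mul, RCLike.norm_ofReal]
          _ ≤ (K * dist z w) * (K * dist z y + K * dist z y)
                + dist z w * (K ^ 2 * dist z y) := by
              have h1 : ‖k z + k w‖ ≤ K * dist z y + K * dist z y :=
                (norm_add_le _ _).trans (add_le_add (hkd z) ((hkd w).trans (by gcongr)))
              have h2 : |dist w y - dist z y| ≤ dist z w := by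
                rw [abs_sub_comm]; exact abs_dist_sub_le z w y
              have h3 : ‖q w‖ ≤ K ^ 2 * dist z y := (hnq w).trans (by gcongr)
              have h4 := hK z w
              gcongr
          _ = _ := by ring
      exact le_of_mul_le_mul_left n h
  intro z w
  rcases le_total (dist w y) (dist z y) with h | h
  · exact key z w h
  · rw [norm_sub_rev, dist_comm]; exact key w z h

end Closure

/-! ### Characters of the Lipschitz algebra -/

/-- The algebra of bounded Lipschitz functions, as a subalgebra of all functions `X → 𝕂`. -/
def LipAlg (𝕂 X : Type*) [RCLike 𝕂] [PseudoMetricSpace X] : Subalgebra 𝕂 (X → 𝕂) where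
  carrier := {f | IsLip f}
  mul_mem' := IsLip.mul
  add_mem' := IsLip.add
  algebraMap_mem' c := IsLip.const c

section Characters

variable {𝕂 X : Type*} [RCLike 𝕂] [MetricSpace X]

lemma isLip_dist (hXb : IsBounded (univ : Set X)) (x : X) :
    IsLip (fun z => (dist z x : 𝕂)) := by
  obtain ⟨D, hD⟩ := Metric.isBounded_iff.1 hXb
  exact IsLip.ofReal (LipschitzWith.dist_left x) (C := D) fun z => by
    rw [abs_of_nonneg dist_nonneg]; exact hD (mem_univ _) (mem_univ _)

/-- A character of `LipAlg 𝕂 X` is approximated on finite sets by point evaluations. -/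
lemma exists_approx (φ : LipAlg 𝕂 X →ₐ[𝕂] 𝕂) {s : Set (LipAlg 𝕂 X)} (hs : s.Finite) {δ : ℝ}
    (hδ : 0 < δ) : ∃ z : X, ∀ f ∈ s, ‖f.1 z - φ f‖ < δ := by
  by_contra! hcon
  let u : LipAlg 𝕂 X → LipAlg 𝕂 X := fun f => f - algebraMap 𝕂 _ (φ f)
  let v : LipAlg 𝕂 X → LipAlg 𝕂 X := fun f => ⟨fun x => (starRingEnd 𝕂) ((u f).1 x), (u f).2.star⟩
  let g : LipAlg 𝕂 X := ∑ f ∈ hs.toFinset, u f * v f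
  have hu : ∀ f, φ (u f) = 0 := fun f => by simp [u]
  have hg : φ g = 0 := by simp [g, hu]
  have hgx : ∀ x, g.1 x = ((∑ f ∈ hs.toFinset, ‖f.1 x - φ f‖ ^ 2 : ℝ) : 𝕂) := fun x => by
    have e : g.1 = ∑ f ∈ hs.toFinset, (u f).1 * (v f).1 := by
      simp [g]
    rw [e, Finset.sum_apply]
    push_cast
    refine Finset.sum_congr rfl fun f _ => ?_
    exact RCLike.mul_conj _
  have hlow : ∀ x, δ ^ 2 ≤ ‖g.1 x‖ := fun x => by
    obtain ⟨f, hf, hfx⟩ := hcon x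
    rw [hgx, RCLike.norm_ofReal]
    refine le_trans ?_ (le_abs_self _)
    refine (pow_le_pow_left₀ hδ.le hfx 2).trans ?_
    exact Finset.single_le_sum (f := fun f : LipAlg 𝕂 X => ‖f.1 x - φ f‖ ^ 2)
      (fun _ _ => by positivity) (hs.mem_toFinset.2 hf)
  let i : LipAlg 𝕂 X := ⟨fun x => (g.1 x)⁻¹, g.2.inv (by positivity) hlow⟩
  have hgi : g * i = 1 := by
    ext x
    exact mul_inv_cancel₀ (norm_pos_iff.1 ((by positivity : 0 < δ ^ 2).trans_le (hlow x)))
  have := congrArg φ hgi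
  rw [map_mul, hg, zero_mul, map_one] at this
  exact zero_ne_one this

/-- The bump function of height and radius `r` around the set `A`. -/
noncomputable def bump (A : Set X) (r : ℝ) (x : X) : ℝ := max (r - infDist x A) 0

lemma isLip_bump (A : Set X) (r : ℝ) : IsLip (fun x => (bump A r x : 𝕂)) := by
  refine IsLip.ofReal (K := 1) (C := max r 0) ?_ fun x => ?_
  · refine LipschitzWith.of_dist_le_mul fun x y => ?_
    have h := (Metric.lipschitz_infDist_pt A).dist_le_mul x y
    rw [Real.dist_eq] at h ⊢
    refine (abs_max_sub_max_le_abs _ _ _).trans ?_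
    rw [sub_sub_sub_cancel_left, abs_sub_comm]
    exact h
  · rw [abs_of_nonneg (le_max_right _ _)]
    exact max_le_max (by linarith [infDist_nonneg (x := x) (s := A)]) le_rfl

lemma bump_of_mem {A : Set X} {r : ℝ} (hr : 0 ≤ r) {x : X} (hx : x ∈ A) : bump A r x = r := by
  simp [bump, infDist_zero_of_mem hx, hr]

lemma bump_mul_bump {A B : Set X} {r : ℝ} (hA : A.Nonempty) (hB : B.Nonempty)
    (hAB : ∀ a ∈ A, ∀ b ∈ B, 2 * r ≤ dist a b) (x : X) : bump A r x * bump B r x = 0 := by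
  by_contra h
  obtain ⟨h1, h2⟩ := mul_ne_zero_iff.1 h
  have lt : ∀ S : Set X, bump S r x ≠ 0 → infDist x S < r := fun S hS => by
    by_contra! hle
    exact hS (max_eq_right (by linarith))
  obtain ⟨a, ha, hxa⟩ := (infDist_lt_iff hA).1 (lt A h1)
  obtain ⟨b, hb, hxb⟩ := (infDist_lt_iff hB).1 (lt B h2)
  have := dist_triangle_left a b x
  linarith [hAB a ha b hb]

/-- A character whose kernel contains an `f` dividing the square of each element of the kernel is
a point evaluation. -/
lemma exists_eval [CompleteSpace X] (hXb : IsBounded (univ : Set X)) (φ : LipAlg 𝕂 X →ₐ[𝕂] 𝕂)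
    (f : LipAlg 𝕂 X) (hf : φ f = 0) (hdiv : ∀ k, φ k = 0 → f ∣ k ^ 2) :
    ∃ x : X, ∀ k, φ k = k.1 x := by
  let p : X → LipAlg 𝕂 X := fun x => ⟨fun z => (dist z x : 𝕂), isLip_dist hXb x⟩
  have hp : ∀ x z δ, ‖(p x).1 z - φ (p x)‖ < δ → |dist z x - ‖φ (p x)‖| < δ := fun x z δ h => by
    refine lt_of_le_of_lt ?_ h
    have := abs_norm_sub_norm_le ((p x).1 z) (φ (p x))
    rwa [show ‖(p x).1 z‖ = dist z x by
      simp only [p]; rw [RCLike.norm_ofReal, abs_of_nonneg dist_nonneg]] at this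
  by_cases hcase : ∀ ε > 0, ∃ x, ‖φ (p x)‖ < ε
  · have hpos : ∀ n : ℕ, (0 : ℝ) < 1 / ((n : ℝ) + 1) := fun n => Nat.one_div_pos_of_nat
    choose x hx using fun n : ℕ => hcase _ (hpos n)
    have hlim := tendsto_one_div_add_atTop_nhds_zero_nat (𝕜 := ℝ)
    have hcau : CauchySeq x := by
      refine cauchySeq_of_le_tendsto_0 (fun n : ℕ => 4 * (1 / ((n : ℝ) + 1))) ?_ (by
        simpa using hlim.const_mul 4)
      intro n m N hn hm
      obtain ⟨z, hz⟩ := exists_approx φ (s := {p (x n), p (x m)}) (by simp) (hpos N)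
      have h1 := abs_lt.1 (hp _ _ _ (hz _ (by simp) : ‖(p (x n)).1 z - φ (p (x n))‖ < _))
      have h2 := abs_lt.1 (hp _ _ _ (hz _ (by simp) : ‖(p (x m)).1 z - φ (p (x m))‖ < _))
      have h3 : 1 / ((n : ℝ) + 1) ≤ 1 / ((N : ℝ) + 1) := Nat.one_div_le_one_div hn
      have h4 : 1 / ((m : ℝ) + 1) ≤ 1 / ((N : ℝ) + 1) := Nat.one_div_le_one_div hm
      have := dist_triangle_left (x n) (x m) z
      linarith [hx n, hx m]
    obtain ⟨a, ha⟩ := cauchySeq_tendsto_of_complete hcau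
    refine ⟨a, fun k => ?_⟩
    obtain ⟨K, C, hK0, -, hK, -⟩ := k.2.exists_bounds
    have hle : ∀ n : ℕ, ‖φ k - k.1 a‖ ≤
        1 / ((n : ℝ) + 1) + K * (2 * (1 / ((n : ℝ) + 1)) + dist (x n) a) := fun n => by
      obtain ⟨z, hz⟩ := exists_approx φ (s := {p (x n), k}) (by simp) (hpos n)
      have h1 := abs_lt.1 (hp _ _ _ (hz _ (by simp) : ‖(p (x n)).1 z - φ (p (x n))‖ < _))
      have h2 : ‖k.1 z - φ k‖ < _ := hz _ (by simp)
      rw [norm_sub_rev] at h2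
      have h3 : dist z a ≤ 2 * (1 / ((n : ℝ) + 1)) + dist (x n) a := by
        linarith [dist_triangle z (x n) a, hx n]
      have h4 := (hK z a).trans (mul_le_mul_of_nonneg_left h3 hK0)
      linarith [norm_sub_le_norm_sub_add_norm_sub (φ k) (k.1 z) (k.1 a)]
    have ht : Filter.Tendsto
        (fun n : ℕ => 1 / ((n : ℝ) + 1) + K * (2 * (1 / ((n : ℝ) + 1)) + dist (x n) a))
        Filter.atTop (nhds (0 + K * (2 * 0 + 0))) :=
      hlim.add (((hlim.const_mul 2).add (tendsto_iff_dist_tendsto_zero.1 ha)).const_mul K)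
    have := ge_of_tendsto' ht hle
    rw [mul_zero, add_zero, mul_zero, add_zero, norm_le_zero_iff, sub_eq_zero] at this
    exact this
  · exfalso
    push Not at hcase
    obtain ⟨ε, hε, hlow⟩ := hcase
    -- The pairs record a point together with a bound on `f` there, so that the bounds improve
    -- along the sequence.
    obtain ⟨u, hu, hur⟩ := exists_seq_of_forall_finset_exists
      (fun q : ℕ × X => ‖f.1 q.2‖ < 1 / ((q.1 : ℝ) + 1))
      (fun q q' => q.1 < q'.1 ∧ ε / 2 ≤ dist q.2 q'.2) (fun s _ => by
        let n := s.sup Prod.fst + 1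
        obtain ⟨z, hz⟩ := exists_approx φ (s := insert f ((fun q => p q.2) '' (s : Set (ℕ × X))))
          ((s.finite_toSet.image _).insert f)
          (δ := min (1 / ((n : ℝ) + 1)) (ε / 2)) (lt_min Nat.one_div_pos_of_nat (by positivity))
        refine ⟨(n, z), ?_, fun q hq => ⟨Nat.lt_succ_of_le (Finset.le_sup (f := Prod.fst) hq), ?_⟩⟩
        · have := hz f (mem_insert _ _)
          rw [hf, sub_zero] at this
          exact this.trans_le (min_le_left _ _)
        · have h1 := hz (p q.2) (mem_insert_of_mem _ ⟨q, hq, rfl⟩)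
          have h2 := abs_lt.1 (hp _ _ _ (h1.trans_le (min_le_right _ _)))
          rw [dist_comm]
          show ε / 2 ≤ dist z q.2
          linarith [hlow q.2])
    have hge : ∀ n, n ≤ (u n).1 := fun n =>
      (show StrictMono fun n => (u n).1 from fun m n h => (hur m n h).1).le_apply
    have hun : ∀ n, ‖f.1 (u n).2‖ ≤ 1 / ((n : ℝ) + 1) := fun n =>
      (hu n).le.trans (Nat.one_div_le_one_div (hge n))
    have hsep : ∀ m n, m ≠ n → ε / 2 ≤ dist (u m).2 (u n).2 := fun m n h => by
      rcases lt_or_gt_of_ne h with h | h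
      · exact (hur m n h).2
      · rw [dist_comm]; exact (hur n m h).2
    -- A bump function around a subsequence is not in the kernel.
    have hno : ∀ σ : ℕ → ℕ, (∀ n, n ≤ σ n) →
        φ ⟨fun x => (bump (range fun n => (u (σ n)).2) (ε / 4) x : 𝕂), isLip_bump _ _⟩ ≠ 0 := by
      intro σ hσ h0
      obtain ⟨m, hm⟩ := hdiv _ h0
      obtain ⟨-, C, -, hC0, -, hC⟩ := m.2.exists_bounds
      have hle : ∀ n : ℕ, (ε / 4) ^ 2 ≤ 1 / ((n : ℝ) + 1) * C := fun n => by
        have e := congrFun (congrArg Subtype.val hm) (u (σ n)).2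
        have e' : ((bump (range fun n => (u (σ n)).2) (ε / 4) (u (σ n)).2 : ℝ) : 𝕂) ^ 2
          = f.1 (u (σ n)).2 * m.1 (u (σ n)).2 := e
        rw [bump_of_mem (by positivity) (mem_range_self n)] at e'
        have e2 := congrArg norm e'
        rw [norm_pow, RCLike.norm_ofReal, sq_abs, norm_mul] at e2
        rw [e2]
        exact mul_le_mul ((hun _).trans (Nat.one_div_le_one_div (hσ n))) (hC _) (norm_nonneg _)
          Nat.one_div_pos_of_nat.le
      have := ge_of_tendsto' ((tendsto_one_div_add_atTop_nhds_zero_nat (𝕜 := ℝ)).mul_const C) hle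
      rw [zero_mul] at this
      have : 0 < (ε / 4) ^ 2 := by positivity
      linarith
    refine mul_ne_zero (hno (fun n => 2 * n) fun n => by omega)
      (hno (fun n => 2 * n + 1) fun n => by omega) ?_
    rw [← map_mul]
    convert map_zero φ
    ext x
    show ((bump _ _ x : ℝ) : 𝕂) * ((bump _ _ x : ℝ) : 𝕂) = 0
    rw [← RCLike.ofReal_mul, bump_mul_bump (range_nonempty _) (range_nonempty _), RCLike.ofReal_zero]
    rintro _ ⟨m, rfl⟩ _ ⟨n, rfl⟩
    have := hsep (2 * m) (2 * n + 1) (by omega)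
    linarith

end Characters

/-! ### Algebra isomorphisms as composition operators -/

/-- For `X`, `Y` bounded and `X` complete, every algebra isomorphism from `LipAlg 𝕂 X` to
`LipAlg 𝕂 Y` is a composition operator. -/
lemma exists_comp {𝕂 X Y : Type*} [RCLike 𝕂] [MetricSpace X] [CompleteSpace X] [MetricSpace Y]
    (hXb : IsBounded (univ : Set X)) (hYb : IsBounded (univ : Set Y))
    (J : LipAlg 𝕂 X ≃ₐ[𝕂] LipAlg 𝕂 Y) : ∃ h : Y → X, ∀ f y, (J f).1 y = f.1 (h y) := by
  suffices H : ∀ y, ∃ x, ∀ f, (J f).1 y = f.1 x by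
    choose h hh using H
    exact ⟨h, fun f y => hh y f⟩
  intro y
  let φ : LipAlg 𝕂 X →ₐ[𝕂] 𝕂 :=
    ((Pi.evalAlgHom 𝕂 (fun _ : Y => 𝕂) y).comp (LipAlg 𝕂 Y).val).comp J.toAlgHom
  let d : LipAlg 𝕂 Y := ⟨fun z => (dist z y : 𝕂), isLip_dist hYb y⟩
  refine exists_eval hXb φ (J.symm d) ?_ fun k hk => ?_
  · show (J (J.symm d)).1 y = 0
    rw [J.apply_symm_apply]
    simp [d]
  · have hk' : (J k).1 y = 0 := hk
    obtain ⟨h1, h2⟩ := (J k).2.sq_div_dist y hk'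
    refine ⟨J.symm ⟨_, h1⟩, ?_⟩
    rw [← map_mul, ← J.symm_apply_apply (k ^ 2), map_pow J]
    congr 1
    ext z
    exact h2 z

/-! ### Lipschitz estimates for the composing map -/

/-- The pairing of `ℓ¹` with bounded functions. -/
lemma summable_lp_mul {X : Type*} (a : lp (fun _ : X => ℝ) 1) {w : X → ℝ} {M : ℝ}
    (hw : ∀ x, |w x| ≤ M) :
    Summable (fun x => a x * w x) ∧ |∑' x, a x * w x| ≤ M * ‖a‖ := by
  have hs : Summable fun x => |a x| := by
    have := (lp.memℓp a).summable (by simp)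
    simpa using this
  have hn : ‖a‖ = ∑' x, |a x| := by
    have := lp.norm_eq_tsum_rpow (p := 1) (by simp) a
    simpa using this
  have hle : ∀ x, ‖a x * w x‖ ≤ |a x| * M := fun x => by
    rw [norm_mul, Real.norm_eq_abs, Real.norm_eq_abs]
    exact mul_le_mul_of_nonneg_left (hw x) (abs_nonneg _)
  refine ⟨Summable.of_norm_bounded (hs.mul_right M) hle, ?_⟩
  rw [hn, mul_comm, ← tsum_mul_right]
  exact tsum_of_norm_bounded (hs.mul_right M).hasSum hle

/-- If `X` is bounded and composition with `h` preserves bounded Lipschitz functions, then `h` is Lipschitz. -/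
lemma lipschitz_of_comp (𝕂 : Type*) {X Y : Type*} [RCLike 𝕂] [MetricSpace X] [MetricSpace Y]
    (hXb : IsBounded (univ : Set X)) (h : Y → X)
    (hh : ∀ f : X → 𝕂, IsLip f → IsLip (fun y => f (h y))) :
    ∃ K : ℝ≥0, LipschitzWith K h := by
  classical
  obtain ⟨D, hD⟩ := Metric.isBounded_iff.1 hXb
  have hD' : ∀ t x : X, |dist t x| ≤ D := fun t x => by
    rw [abs_of_nonneg dist_nonneg]; exact hD (mem_univ _) (mem_univ _)
  have hdd : ∀ t s x : X, |dist t x - dist s x| ≤ dist t s := fun t s x => abs_dist_sub_le t s x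
  let F : lp (fun _ : X => ℝ) 1 → X → ℝ := fun a t => ∑' x, a x * dist t x
  have hFsub : ∀ a t s, F a t - F a s = ∑' x, a x * (dist t x - dist s x) := fun a t s => by
    simp only [F, mul_sub]
    exact ((summable_lp_mul a (hD' t)).1.tsum_sub (summable_lp_mul a (hD' s)).1).symm
  have hFlip : ∀ a, IsLip (fun t => (F a t : 𝕂)) := fun a => by
    refine IsLip.ofReal (K := ‖a‖₊) (C := D * ‖a‖) (LipschitzWith.of_dist_le_mul fun t s => ?_)
      fun t => (summable_lp_mul a (hD' t)).2
    rw [Real.dist_eq, hFsub, mul_comm]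
    exact (summable_lp_mul a (hdd t s)).2
  -- The functionals `a ↦ (F a (h y) - F a (h z)) / dist y z` on `ℓ¹(X)`.
  let L : Y × Y → lp (fun _ : X => ℝ) 1 →L[ℝ] ℝ := fun q =>
    (dist q.1 q.2)⁻¹ • LinearMap.mkContinuous
      { toFun := fun a => ∑' x, a x * (dist (h q.1) x - dist (h q.2) x)
        map_add' := fun a b => by
          rw [← (summable_lp_mul a (hdd _ _)).1.tsum_add (summable_lp_mul b (hdd _ _)).1]
          simp [add_mul]
        map_smul' := fun c a => by
          simp [mul_assoc, tsum_mul_left] }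
      (dist (h q.1) (h q.2)) fun a => (summable_lp_mul a (hdd _ _)).2
  have hL : ∀ q a, L q a = (dist q.1 q.2)⁻¹ * (F a (h q.1) - F a (h q.2)) := fun q a => by
    rw [hFsub]; rfl
  obtain ⟨C, hC⟩ := banach_steinhaus (g := L) fun a => by
    obtain ⟨K, -, hK0, -, hK, -⟩ := (hh _ (hFlip a)).exists_bounds
    refine ⟨K, fun q => ?_⟩
    have := hK q.1 q.2
    rw [← RCLike.ofReal_sub, RCLike.norm_ofReal] at this
    rw [hL, norm_mul, norm_inv, Real.norm_eq_abs, Real.norm_eq_abs, abs_of_nonneg dist_nonneg,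
      mul_comm, ← div_eq_mul_inv]
    exact div_le_of_le_mul₀ dist_nonneg hK0 this
  refine ⟨C.toNNReal, LipschitzWith.of_dist_le_mul fun y z => ?_⟩
  rcases eq_or_ne y z with rfl | hyz
  · simp
  have hpos : 0 < dist y z := dist_pos.2 hyz
  let e : lp (fun _ : X => ℝ) 1 := lp.single 1 (h z) (1 : ℝ)
  have he : ‖e‖ = 1 := by
    simp [e, lp.norm_single]
  have hFe : ∀ t, F e t = dist t (h z) := fun t => by
    simp only [F]
    rw [tsum_eq_single (h z)]
    · simp [e]
    · intro x hx
      simp [e, hx]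
  have h1 := (L (y, z)).le_of_opNorm_le (hC (y, z)) e
  rw [hL, hFe, hFe, he, dist_self, sub_zero, mul_one, Real.norm_eq_abs,
    abs_of_nonneg (by positivity), inv_mul_le_iff₀ hpos, mul_comm] at h1
  exact h1.trans (mul_le_mul_of_nonneg_right (Real.le_coe_toNNReal C) dist_nonneg)

lemma lipNorm_comp_le {𝕂 X Y : Type*} [RCLike 𝕂] [MetricSpace X] [MetricSpace Y]
    {h : Y → X} {K : ℝ≥0} (hK : LipschitzWith K h) {f : X → 𝕂} (hf : IsLip f) :
    lipNorm (fun y => f (h y)) ≤ max 1 (K : ℝ) * lipNorm f := by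
  obtain ⟨L, C, hL0, hC0, hL, hC⟩ := hf.exists_bounds
  have b1 : BddAbove (range fun x => ‖f x‖) := ⟨C, by rintro _ ⟨x, rfl⟩; exact hC x⟩
  have b2 : BddAbove (range fun p : X × X => ‖f p.1 - f p.2‖ / dist p.1 p.2) :=
    ⟨L, by rintro _ ⟨p, rfl⟩; exact div_le_of_le_mul₀ dist_nonneg hL0 (hL _ _)⟩
  have n0 : 0 ≤ lipNorm f := le_max_of_le_left (Real.iSup_nonneg fun _ => norm_nonneg _)
  have m0 : (0 : ℝ) ≤ max 1 (K : ℝ) := zero_le_one.trans (le_max_left _ _)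
  refine max_le (Real.iSup_le (fun y => ?_) (by positivity))
    (Real.iSup_le (fun q => ?_) (by positivity))
  · have h1 : ‖f (h y)‖ ≤ lipNorm f := (le_ciSup b1 (h y)).trans (le_max_left _ _)
    exact h1.trans (le_mul_of_one_le_left n0 (le_max_left _ _))
  · refine div_le_of_le_mul₀ dist_nonneg (by positivity) ?_
    have h1 : ‖f (h q.1) - f (h q.2)‖ / dist (h q.1) (h q.2) ≤ lipNorm f :=
      (le_ciSup b2 (h q.1, h q.2)).trans (le_max_right _ _)
    have h2 : ‖f (h q.1) - f (h q.2)‖ ≤ lipNorm f * dist (h q.1) (h q.2) := by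
      rcases eq_or_ne (h q.1) (h q.2) with e | e
      · simp [e]
      · exact (div_le_iff₀ (dist_pos.2 e)).1 h1
    have h3 : dist (h q.1) (h q.2) ≤ max 1 (K : ℝ) * dist q.1 q.2 :=
      (hK.dist_le_mul _ _).trans (mul_le_mul_of_nonneg_right (le_max_right _ _) dist_nonneg)
    calc _ ≤ _ := h2
      _ ≤ lipNorm f * (max 1 (K : ℝ) * dist q.1 q.2) := by gcongr
      _ = _ := by ring

/-- Every algebra isomorphism `I : Lip(X) → Lip(Y)` (a bijective linear and
multiplicative map) is continuous and is a composition operator `(I f) y = f (h y)` for some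
bi-Lipschitz homeomorphism `h : Y → X`. -/
theorem algebra_isomorphism_representation
    {𝕂 X Y : Type*} [RCLike 𝕂]
    [MetricSpace X] [CompleteSpace X] [MetricSpace Y] [CompleteSpace Y]
    (hXb : IsBounded (univ : Set X)) (hYb : IsBounded (univ : Set Y))
    (I : (X → 𝕂) → (Y → 𝕂))
    (hmaps : ∀ f, IsLip f → IsLip (I f))
    (hadd : ∀ f g, IsLip f → IsLip g → I (f + g) = I f + I g)
    (hsmul : ∀ (c : 𝕂) (f : X → 𝕂), IsLip f → I (c • f) = c • I f)
    (hmul : ∀ f g, IsLip f → IsLip g → I (f * g) = I f * I g)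
    (hinj : ∀ f g, IsLip f → IsLip g → I f = I g → f = g)
    (hsurj : ∀ g, IsLip g → ∃ f, IsLip f ∧ I f = g) :
    (∃ C : ℝ, 0 ≤ C ∧ ∀ f, IsLip f → lipNorm (I f) ≤ C * lipNorm f) ∧
    ∃ h : Y → X,
      Bijective h ∧ (∃ K : ℝ≥0, LipschitzWith K h) ∧ (∃ K : ℝ≥0, AntilipschitzWith K h) ∧
      ∀ f, IsLip f → ∀ y, I f y = f (h y) := by
  have hI1 : I 1 = 1 := by
    obtain ⟨u, hu, hu1⟩ := hsurj 1 (IsLip.const 1)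
    have := hmul 1 u (IsLip.const 1) hu
    rwa [one_mul, hu1, mul_one, eq_comm] at this
  let T : LipAlg 𝕂 X →ₐ[𝕂] LipAlg 𝕂 Y := AlgHom.ofLinearMap
    { toFun := fun f => ⟨I f.1, hmaps _ f.2⟩
      map_add' := fun f g => Subtype.ext (hadd _ _ f.2 g.2)
      map_smul' := fun c f => Subtype.ext (hsmul c _ f.2) }
    (Subtype.ext hI1) (fun f g => Subtype.ext (hmul _ _ f.2 g.2))
  have hT : Bijective T :=
    ⟨fun f g hfg => Subtype.ext (hinj _ _ f.2 g.2 (congrArg Subtype.val hfg)), fun g => by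
      obtain ⟨f, hf, hfg⟩ := hsurj g.1 g.2
      exact ⟨⟨f, hf⟩, Subtype.ext hfg⟩⟩
  let J : LipAlg 𝕂 X ≃ₐ[𝕂] LipAlg 𝕂 Y := AlgEquiv.ofBijective T hT
  obtain ⟨h, hh⟩ := exists_comp hXb hYb J
  obtain ⟨h', hh'⟩ := exists_comp hYb hXb J.symm
  -- Points are separated by the distance functions.
  have left : ∀ x, h (h' x) = x := fun x => by
    let d : LipAlg 𝕂 X := ⟨fun z => (dist z x : 𝕂), isLip_dist hXb x⟩
    have e := (hh d (h' x)).symm.trans (hh' (J d) x).symm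
    rw [J.symm_apply_apply] at e
    simpa [d] using e
  have right : ∀ y, h' (h y) = y := fun y => by
    let d : LipAlg 𝕂 Y := ⟨fun z => (dist z y : 𝕂), isLip_dist hYb y⟩
    have e := (hh' d (h y)).symm.trans (hh (J.symm d) y).symm
    rw [J.apply_symm_apply] at e
    simpa [d] using e
  have hI : ∀ f, IsLip f → ∀ y, I f y = f (h y) := fun f hf y => hh ⟨f, hf⟩ y
  obtain ⟨K, hK⟩ := lipschitz_of_comp 𝕂 hXb h fun f hf => by
    rw [← funext (hI f hf)]; exact hmaps f hf
  obtain ⟨K', hK'⟩ := lipschitz_of_comp 𝕂 hYb h' fun g hg => by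
    rw [← funext (hh' ⟨g, hg⟩)]; exact (J.symm ⟨g, hg⟩).2
  refine ⟨⟨max 1 (K : ℝ), zero_le_one.trans (le_max_left _ _), fun f hf => ?_⟩, h,
    bijective_iff_has_inverse.2 ⟨h', right, left⟩, ⟨K, hK⟩, ⟨K', hK'.to_rightInverse right⟩, hI⟩
  rw [funext (hI f hf)]
  exact lipNorm_comp_le hK hf
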